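/- arXiv:2206.04412 — 2 statements merged into one kernel-verified Lean document; each statement's English description precedes it below -/
import Mathlib

section
/- Let {x^k}, {y^k}, {z^k} be generated by the multiobjective MFISTA algorithm, and define σ_k(z) := min_{i=1,…,m} ( F_i(x^k) − F_i(z) ). Then for all z ∈ ℝ^n and all k ≥ 0: σ_k(z) − σ_{k+1}(z) ≥ (ℓ/2)( 2⟨z^{k+1} − y^{k+1}, y^{k+1} − x^k⟩ + ‖z^{k+1} − y^{k+1}‖² ) + ((ℓ − L)/2)‖z^{k+1} − y^{k+1}‖². -/
open scoped RealInnerProductSpace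

noncomputable abbrev E (n : ℕ) := EuclideanSpace ℝ (Fin n)


theorem aux_line {n : ℕ} (f : E n → ℝ) (hf : ContDiff ℝ 1 f) (b v : E n) (s : ℝ) :
    HasDerivAt (fun s : ℝ => f (b + s • v)) ⟪gradient f (b + s • v), v⟫ s := by
  have h1 : HasFDerivAt f (fderiv ℝ f (b + s • v)) (b + s • v) :=
    ((hf.differentiable (by norm_num)) _).hasFDerivAt
  have h2 : HasDerivAt (fun s : ℝ => b + s • v) v s := by
    simpa using ((hasDerivAt_id s).smul_const v).const_add b
  have h3 := h1.comp_hasDerivAt s h2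
  have h4 : ⟪gradient f (b + s • v), v⟫ = fderiv ℝ f (b + s • v) v := by
    simp [gradient]
  rw [h4]
  exact h3

theorem aux_grad {n : ℕ} (f : E n → ℝ) (hf : ContDiff ℝ 1 f) (hc : ConvexOn ℝ Set.univ f)
    (a b : E n) : ⟪gradient f b, a - b⟫ + f b ≤ f a := by
  have h := aux_line f hf b (a - b) 0
  have hc1 : ConvexOn ℝ Set.univ (fun s : ℝ => f (b + s • (a - b))) := by
    refine ⟨convex_univ, fun p _ q _ α β hα hβ hαβ => ?_⟩
    have := hc.2 (Set.mem_univ (b + p • (a - b))) (Set.mem_univ (b + q • (a - b))) hα hβ hαβ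
    have e : b + (α • p + β • q) • (a - b) = α • (b + p • (a - b)) + β • (b + q • (a - b)) := by
      obtain rfl : β = 1 - α := by linarith
      simp only [smul_eq_mul]
      module
    simp only [e]
    exact this
  have := hc1.le_slope_of_hasDerivAt (Set.mem_univ 0) (Set.mem_univ 1) (by norm_num) h
  simp only [slope, vsub_eq_sub, sub_zero, inv_one, one_smul, zero_smul, add_zero,
    add_sub_cancel] at this
  linarith

theorem aux_desc {n : ℕ} (f : E n → ℝ) (hf : ContDiff ℝ 1 f) (L : ℝ)
    (hl : ∀ a b, ‖gradient f a - gradient f b‖ ≤ L * ‖a - b‖)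
    (p b : E n) : f p ≤ f b + ⟪gradient f b, p - b⟫ + L / 2 * ‖p - b‖ ^ 2 := by
  set v := p - b with hv
  have hder : ∀ s : ℝ, HasDerivAt
      (fun s : ℝ => f (b + s • v) - s * ⟪gradient f b, v⟫ - s ^ 2 * (L / 2 * ‖v‖ ^ 2))
      (⟪gradient f (b + s • v), v⟫ - 1 * ⟪gradient f b, v⟫ -
        ((2 : ℕ) * s ^ (2 - 1)) * (L / 2 * ‖v‖ ^ 2)) s := fun s =>
    ((aux_line f hf b v s).sub ((hasDerivAt_id s).mul_const _)).sub
      ((hasDerivAt_pow 2 s).mul_const _)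
  have hanti := antitoneOn_of_deriv_nonpos (convex_Icc (0 : ℝ) 1)
    (fun s _ => (hder s).continuousAt.continuousWithinAt)
    (fun s _ => (hder s).differentiableAt.differentiableWithinAt)
    (by
      intro s hs
      rw [interior_Icc] at hs
      rw [(hder s).deriv]
      have h1 := real_inner_le_norm (gradient f (b + s • v) - gradient f b) v
      have h2 := hl (b + s • v) b
      rw [add_sub_cancel_left, norm_smul, Real.norm_of_nonneg hs.1.le] at h2
      have h3 := mul_le_mul_of_nonneg_right h2 (norm_nonneg v)
      rw [inner_sub_left] at h1
      simp only [Nat.cast_ofNat, Nat.add_one_sub_one, pow_one]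
      nlinarith)
  have := hanti (Set.left_mem_Icc.2 zero_le_one) (Set.right_mem_Icc.2 zero_le_one) zero_le_one
  have e : b + v = p := by rw [hv]; abel
  simp only [one_smul, zero_smul, add_zero, e] at this
  linarith

theorem aux_norm {n : ℕ} (a b p : E n) (s : ℝ) :
    ‖p + s • (a - p) - b‖ ^ 2 = ‖p - b‖ ^ 2
      + s * (- 2 * ‖p - b‖ ^ 2 - 2 * ⟪p - b, b - a⟫)
      + s ^ 2 * ‖a - p‖ ^ 2 := by
  have e : p + s • (a - p) - b = (p - b) + s • (a - p) := by abel
  have e2 : a - p = -(b - a) - (p - b) := by abel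
  rw [e, norm_add_sq_real, inner_smul_right, norm_smul, mul_pow, Real.norm_eq_abs, sq_abs]
  have : ⟪p - b, a - p⟫ = - ⟪p - b, b - a⟫ - ‖p - b‖ ^ 2 := by
    rw [e2, inner_sub_right, inner_neg_right, real_inner_self_eq_norm_sq]
  rw [this]; ring

theorem aux_sup {n m : ℕ} (hm : 1 ≤ m) (ψ : Fin m → E n → ℝ)
    (hψ : ∀ i, ConvexOn ℝ Set.univ (ψ i)) (ℓ : ℝ) (a b p : E n)
    (ha : ∀ i, ψ i a ≤ 0)
    (hp : ∀ w, (⨆ i, ψ i p) + ℓ / 2 * ‖p - b‖ ^ 2 ≤ (⨆ i, ψ i w) + ℓ / 2 * ‖w - b‖ ^ 2) :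
    (⨆ i, ψ i p) ≤ - ℓ * ‖p - b‖ ^ 2 - ℓ * ⟪p - b, b - a⟫ := by
  have : Nonempty (Fin m) := ⟨⟨0, hm⟩⟩
  set S := ⨆ i, ψ i p with hS
  have hi : ∀ i, ψ i p ≤ S := fun i => le_ciSup (f := fun i => ψ i p) (Set.finite_range _).bddAbove i
  have key : ∀ s : ℝ, 0 < s → s < 1 →
      S ≤ - ℓ * ‖p - b‖ ^ 2 - ℓ * ⟪p - b, b - a⟫ + s * (ℓ / 2 * ‖a - p‖ ^ 2) := by
    intro s h0 h1
    have h2 : (⨆ i, ψ i (p + s • (a - p))) ≤ (1 - s) * S := by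
      refine ciSup_le fun i => ?_
      have := (hψ i).2 (Set.mem_univ p) (Set.mem_univ a) (sub_nonneg.2 h1.le) h0.le (by ring)
      have e : p + s • (a - p) = (1 - s) • p + s • a := by module
      rw [e]
      simp only [smul_eq_mul] at this
      nlinarith [hi i, ha i]
    have h3 := hp (p + s • (a - p))
    rw [aux_norm] at h3
    have h4 : s * S ≤ s * (- ℓ * ‖p - b‖ ^ 2 - ℓ * ⟪p - b, b - a⟫ + s * (ℓ / 2 * ‖a - p‖ ^ 2)) := by
      linarith
    exact le_of_mul_le_mul_left h4 h0
  have ht : Filter.Tendsto (fun s : ℝ => - ℓ * ‖p - b‖ ^ 2 - ℓ * ⟪p - b, b - a⟫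
      + s * (ℓ / 2 * ‖a - p‖ ^ 2)) (nhdsWithin 0 (Set.Ioi 0))
      (nhds (- ℓ * ‖p - b‖ ^ 2 - ℓ * ⟪p - b, b - a⟫ + 0 * (ℓ / 2 * ‖a - p‖ ^ 2))) := by
    apply Filter.Tendsto.mono_left _ nhdsWithin_le_nhds
    exact Continuous.tendsto (by fun_prop) 0
  have := ge_of_tendsto ht (b := S) (by
    filter_upwards [Ioo_mem_nhdsGT (zero_lt_one' ℝ)] with s hs using key s hs.1 hs.2)
  linarith

theorem stmt_8
    (n m : ℕ) (hn : 1 ≤ n) (hm : 1 ≤ m)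
    (f g F : Fin m → E n → ℝ)
    (L : Fin m → ℝ) (hL : ∀ i, 0 < L i)
    (hfc : ∀ i, ConvexOn ℝ Set.univ (f i))
    (hfd : ∀ i, ContDiff ℝ 1 (f i))
    (hflip : ∀ i a b, ‖gradient (f i) a - gradient (f i) b‖ ≤ L i * ‖a - b‖)
    (hgc : ∀ i, ConvexOn ℝ Set.univ (g i))
    (hF : ∀ i w, F i w = f i w + g i w)
    (ℓ : ℝ) (hℓ : 0 < ℓ) (hℓL : ∀ i, L i ≤ ℓ)
    (d : E n → E n → E n)
    (hd : ∀ a b w,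
      (⨆ i, (⟪gradient (f i) b, d a b - b⟫ + g i (d a b) + f i b - F i a)) +
          ℓ / 2 * ‖d a b - b‖ ^ 2 ≤
        (⨆ i, (⟪gradient (f i) b, w - b⟫ + g i w + f i b - F i a)) +
          ℓ / 2 * ‖w - b‖ ^ 2)
    (x y z : ℕ → E n) (t : ℕ → ℝ)
    (hy1 : y 1 = x 0) (ht1 : t 1 = 1)
    (ht : ∀ k, 1 ≤ k → t (k + 1) = (1 + Real.sqrt (1 + 4 * t k ^ 2)) / 2)
    (hz : ∀ k, 1 ≤ k → z k = d (x (k - 1)) (y k))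
    (hxpos : ∀ k, 1 ≤ k → 0 ≤ (⨆ i, (F i (x (k - 1)) - F i (z k))) → x k = z k)
    (hxneg : ∀ k, 1 ≤ k → ¬ 0 ≤ (⨆ i, (F i (x (k - 1)) - F i (z k))) → x k = x (k - 1))
    (hy : ∀ k, 1 ≤ k →
      y (k + 1) = x k + (t k / t (k + 1)) • (z k - x k) +
        ((t k - 1) / t (k + 1)) • (x k - x (k - 1))) :
    ∀ (w : E n) (k : ℕ),
      (⨅ i, (F i (x k) - F i w)) - (⨅ i, (F i (x (k + 1)) - F i w)) ≥
        ℓ / 2 * (2 * ⟪z (k + 1) - y (k + 1), y (k + 1) - x k⟫ +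
            ‖z (k + 1) - y (k + 1)‖ ^ 2) +
          (ℓ - ⨆ i, L i) / 2 * ‖z (k + 1) - y (k + 1)‖ ^ 2 := by
  intro w k
  have : Nonempty (Fin m) := ⟨⟨0, hm⟩⟩
  have hzk := hz (k + 1) (by omega)
  have hxp := hxpos (k + 1) (by omega)
  have hxn := hxneg (k + 1) (by omega)
  rw [Nat.add_sub_cancel] at hzk hxp hxn
  have hdk := hd (x k) (y (k + 1))
  rw [← hzk] at hdk
  generalize z (k + 1) = p at *
  generalize y (k + 1) = b at *
  generalize x (k + 1) = q at *
  generalize x k = a at *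
  have hS := aux_sup hm (fun i u => ⟪gradient (f i) b, u - b⟫ + g i u + f i b - F i a)
    (by
      intro i
      refine ⟨convex_univ, fun u _ v _ α β hα hβ hαβ => ?_⟩
      have h1 := (hgc i).2 (Set.mem_univ u) (Set.mem_univ v) hα hβ hαβ
      simp only [smul_eq_mul] at h1 ⊢
      simp only [inner_sub_right, inner_add_right, inner_smul_right]
      obtain rfl : β = 1 - α := by linarith
      linarith) ℓ a b p
    (by
      intro i
      have := aux_grad (f i) (hfd i) (hfc i) a b
      simp only [hF]
      linarith) hdk
  set R := ℓ / 2 * (2 * ⟪p - b, b - a⟫ + ‖p - b‖ ^ 2) + (ℓ - ⨆ i, L i) / 2 * ‖p - b‖ ^ 2 with hR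
  have hmain : ∀ i, R ≤ F i a - F i p := by
    intro i
    have h1 := le_ciSup (f := fun i => ⟪gradient (f i) b, p - b⟫ + g i p + f i b - F i a)
      (Set.finite_range _).bddAbove i
    have h2 := aux_desc (f i) (hfd i) (L i) (hflip i) p b
    have h3 : L i ≤ ⨆ i, L i := le_ciSup (Set.finite_range _).bddAbove i
    have h4 := mul_le_mul_of_nonneg_right h3 (sq_nonneg ‖p - b‖)
    have h5 := hF i p
    beta_reduce at h1 hS
    rw [hR]
    linarith
  by_cases hc : 0 ≤ ⨆ i, (F i a - F i p)
  · rw [hxp hc]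
    have : (⨅ i, (F i p - F i w)) + R ≤ ⨅ i, (F i a - F i w) := by
      refine le_ciInf fun i => ?_
      have h1 := ciInf_le (f := fun i => F i p - F i w) (Set.finite_range _).bddBelow i
      have h2 := hmain i
      beta_reduce at h1
      linarith
    linarith
  · rw [hxn hc, sub_self]
    have h1 := le_ciSup (f := fun i => F i a - F i p) (Set.finite_range _).bddAbove ⟨0, hm⟩
    have h2 := hmain ⟨0, hm⟩
    beta_reduce at h1
    linarith
end

section
/- Let {x^k}, {y^k}, {z^k} be generated by the multiobjective MFISTA algorithm. Then for all i = 1,…,m and all k ≥ 0: F_i(x^k) − F_i(x^{k+1}) ≥ (ℓ/2)( ‖z^{k+1} − x^k‖² − ‖y^{k+1} − x^k‖² ). -/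
open scoped RealInnerProductSpace

lemma line_deriv {n : ℕ} (f : E n → ℝ) (hfd : ContDiff ℝ 1 f) (y v : E n) (s : ℝ) :
    HasDerivAt (fun s : ℝ => f (y + s • v)) ⟪gradient f (y + s • v), v⟫ s := by
  have h1 : DifferentiableAt ℝ f (y + s • v) := (hfd.differentiable (by norm_num)) _
  have h2 := h1.hasGradientAt.hasFDerivAt
  have h3 : HasDerivAt (fun s : ℝ => y + s • v) v s := by
    simpa using ((hasDerivAt_id s).smul_const v).const_add y
  have h4 := h2.comp_hasDerivAt s h3
  have e : ⟪gradient f (y + s • v), v⟫ =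
      (InnerProductSpace.toDual ℝ (E n) (gradient f (y + s • v))) v := by
    rw [InnerProductSpace.toDual_apply_apply]
  rw [e]
  exact h4

lemma grad_ineq {n : ℕ} (f : E n → ℝ) (hfc : ConvexOn ℝ Set.univ f) (hfd : ContDiff ℝ 1 f)
    (y w : E n) : ⟪gradient f y, w - y⟫ + f y ≤ f w := by
  have h := line_deriv f hfd y (w - y) 0
  have hc : ConvexOn ℝ Set.univ (fun s : ℝ => f (y + s • (w - y))) := by
    refine ⟨convex_univ, fun a _ b _ p q hp hq hpq => ?_⟩
    have := hfc.2 (Set.mem_univ (y + a • (w - y))) (Set.mem_univ (y + b • (w - y))) hp hq hpq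
    convert this using 2
    have hy : y = (p + q) • y := by rw [hpq, one_smul]
    conv_lhs => rw [hy]
    simp only [smul_eq_mul]
    rw [hpq]
    obtain rfl : q = 1 - p := by linarith
    module
  have h5 := hc.le_slope_of_hasDerivAt (Set.mem_univ 0) (Set.mem_univ 1) one_pos h
  simp only [slope_def_field, zero_smul, one_smul, add_zero, add_sub_cancel, sub_zero,
    div_one] at h5
  linarith

lemma descent {n : ℕ} (f : E n → ℝ) (hfd : ContDiff ℝ 1 f) (L : ℝ)
    (hl : ∀ a b, ‖gradient f a - gradient f b‖ ≤ L * ‖a - b‖)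
    (y w : E n) : f w ≤ ⟪gradient f y, w - y⟫ + f y + L / 2 * ‖w - y‖ ^ 2 := by
  set v := w - y with hv
  have hD : ∀ s : ℝ, HasDerivAt
      (fun s : ℝ => f (y + s • v) - s * ⟪gradient f y, v⟫ - s ^ 2 * (L / 2 * ‖v‖ ^ 2))
      (⟪gradient f (y + s • v), v⟫ - 1 * ⟪gradient f y, v⟫ - (2 * s) * (L / 2 * ‖v‖ ^ 2)) s := by
    intro s
    refine ((line_deriv f hfd y v s).sub ((hasDerivAt_id s).mul_const _)).sub ?_
    have := (hasDerivAt_pow 2 s).mul_const (L / 2 * ‖v‖ ^ 2)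
    simpa using this
  have hA : AntitoneOn (fun s : ℝ => f (y + s • v) - s * ⟪gradient f y, v⟫
      - s ^ 2 * (L / 2 * ‖v‖ ^ 2)) (Set.Icc 0 1) := by
    refine antitoneOn_of_deriv_nonpos (convex_Icc 0 1)
      (fun s _ => (hD s).continuousAt.continuousWithinAt)
      (fun s _ => (hD s).differentiableAt.differentiableWithinAt) ?_
    intro s hs
    rw [interior_Icc] at hs
    rw [(hD s).deriv]
    have h1 := real_inner_le_norm (gradient f (y + s • v) - gradient f y) v
    rw [inner_sub_left] at h1
    have h2 := hl (y + s • v) y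
    rw [add_sub_cancel_left, norm_smul, Real.norm_of_nonneg hs.1.le] at h2
    have h3 := mul_le_mul_of_nonneg_right h2 (norm_nonneg v)
    nlinarith
  have := hA (Set.left_mem_Icc.2 zero_le_one) (Set.right_mem_Icc.2 zero_le_one) zero_le_one
  simp only [one_smul, zero_smul, add_zero] at this
  have e : y + v = w := by rw [hv]; abel
  rw [e] at this
  linarith

lemma norm_comb {n : ℕ} (a b : E n) (s : ℝ) :
    ‖(1 - s) • a + s • b‖ ^ 2 = (1 - s) * ‖a‖ ^ 2 + s * ‖b‖ ^ 2 - s * (1 - s) * ‖b - a‖ ^ 2 := by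
  rw [norm_add_sq_real, norm_sub_sq_real, norm_smul, norm_smul, mul_pow, mul_pow,
    inner_smul_left, inner_smul_right, real_inner_comm b a, Real.norm_eq_abs, Real.norm_eq_abs,
    sq_abs, sq_abs]
  simp
  ring

lemma strong_min {n : ℕ} (h : E n → ℝ) (hc : ConvexOn ℝ Set.univ h) (ℓ : ℝ) (hℓ : 0 < ℓ)
    (y z : E n) (hm : ∀ w, h z + ℓ / 2 * ‖z - y‖ ^ 2 ≤ h w + ℓ / 2 * ‖w - y‖ ^ 2) (w : E n) :
    h z + ℓ / 2 * ‖z - y‖ ^ 2 + ℓ / 2 * ‖w - z‖ ^ 2 ≤ h w + ℓ / 2 * ‖w - y‖ ^ 2 := by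
  have key : ∀ s : ℝ, 0 < s → s < 1 →
      h z + ℓ / 2 * ‖z - y‖ ^ 2 + ℓ / 2 * ((1 - s) * ‖w - z‖ ^ 2)
        ≤ h w + ℓ / 2 * ‖w - y‖ ^ 2 := by
    intro s hs hs1
    have h1 := hm ((1 - s) • z + s • w)
    have h2 := hc.2 (Set.mem_univ z) (Set.mem_univ w) (sub_nonneg.2 hs1.le) hs.le (by ring)
    have e : (1 - s) • z + s • w - y = (1 - s) • (z - y) + s • (w - y) := by module
    rw [e, norm_comb, sub_sub_sub_cancel_right] at h1
    simp only [smul_eq_mul] at h2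
    refine le_of_mul_le_mul_left ?_ hs
    nlinarith
  by_contra hcon
  push Not at hcon
  set A := ‖w - z‖ ^ 2
  have hA : 0 ≤ A := sq_nonneg _
  set δ := h z + ℓ / 2 * ‖z - y‖ ^ 2 + ℓ / 2 * A - (h w + ℓ / 2 * ‖w - y‖ ^ 2) with hδ
  have hδ0 : 0 < δ := by linarith
  have hden : 0 < ℓ * A + 2 * δ := by positivity
  have := key (δ / (ℓ * A + 2 * δ)) (by positivity) (by
    rw [div_lt_one hden]; nlinarith [mul_nonneg hℓ.le hA])
  have h2 : δ ≤ δ / (ℓ * A + 2 * δ) * (ℓ / 2 * A) := by linarith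
  rw [div_mul_eq_mul_div, le_div_iff₀ hden] at h2
  nlinarith [mul_nonneg hℓ.le hA, mul_nonneg hδ0.le (mul_nonneg hℓ.le hA)]

theorem stmt_12
    (n m : ℕ) (hn : 1 ≤ n) (hm : 1 ≤ m)
    (f g F : Fin m → E n → ℝ)
    (L : Fin m → ℝ) (hL : ∀ i, 0 < L i)
    (hfc : ∀ i, ConvexOn ℝ Set.univ (f i))
    (hfd : ∀ i, ContDiff ℝ 1 (f i))
    (hflip : ∀ i a b, ‖gradient (f i) a - gradient (f i) b‖ ≤ L i * ‖a - b‖)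
    (hgc : ∀ i, ConvexOn ℝ Set.univ (g i))
    (hF : ∀ i w, F i w = f i w + g i w)
    (ℓ : ℝ) (hℓ : 0 < ℓ) (hℓL : ∀ i, L i ≤ ℓ)
    (d : E n → E n → E n)
    (hd : ∀ a b w,
      (⨆ i, (⟪gradient (f i) b, d a b - b⟫ + g i (d a b) + f i b - F i a)) +
          ℓ / 2 * ‖d a b - b‖ ^ 2 ≤
        (⨆ i, (⟪gradient (f i) b, w - b⟫ + g i w + f i b - F i a)) +
          ℓ / 2 * ‖w - b‖ ^ 2)
    (x y z : ℕ → E n) (t : ℕ → ℝ)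
    (hy1 : y 1 = x 0) (ht1 : t 1 = 1)
    (ht : ∀ k, 1 ≤ k → t (k + 1) = (1 + Real.sqrt (1 + 4 * t k ^ 2)) / 2)
    (hz : ∀ k, 1 ≤ k → z k = d (x (k - 1)) (y k))
    (hxpos : ∀ k, 1 ≤ k → 0 ≤ (⨆ i, (F i (x (k - 1)) - F i (z k))) → x k = z k)
    (hxneg : ∀ k, 1 ≤ k → ¬ 0 ≤ (⨆ i, (F i (x (k - 1)) - F i (z k))) → x k = x (k - 1))
    (hy : ∀ k, 1 ≤ k →
      y (k + 1) = x k + (t k / t (k + 1)) • (z k - x k) +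
        ((t k - 1) / t (k + 1)) • (x k - x (k - 1))) :
    ∀ (i : Fin m) (k : ℕ),
      F i (x k) - F i (x (k + 1)) ≥
        ℓ / 2 * (‖z (k + 1) - x k‖ ^ 2 - ‖y (k + 1) - x k‖ ^ 2) := by
  intro i k
  have : Nonempty (Fin m) := ⟨i⟩
  have hbdd : ∀ u : Fin m → ℝ, BddAbove (Set.range u) := fun u => (Set.finite_range u).bddAbove
  have hzk := hz (k + 1) (by omega)
  have hp := hxpos (k + 1) (by omega)
  have hq := hxneg (k + 1) (by omega)
  simp only [Nat.add_sub_cancel] at hzk hp hq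
  have hmin := hd (x k) (y (k + 1))
  rw [← hzk] at hmin
  set X := x k
  set Y := y (k + 1)
  set Z := z (k + 1)
  have hconv : ConvexOn ℝ Set.univ
      (fun w => ⨆ i, (⟪gradient (f i) Y, w - Y⟫ + g i w + f i Y - F i X)) := by
    refine ⟨convex_univ, fun a _ b _ p q hp hq hpq => ?_⟩
    refine ciSup_le fun j => ?_
    have h1 := le_ciSup (hbdd fun i => (⟪gradient (f i) Y, a - Y⟫ + g i a + f i Y - F i X)) j
    have h2 := le_ciSup (hbdd fun i => (⟪gradient (f i) Y, b - Y⟫ + g i b + f i Y - F i X)) j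
    have h3 := (hgc j).2 (Set.mem_univ a) (Set.mem_univ b) hp hq hpq
    have h4 := mul_le_mul_of_nonneg_left h1 hp
    have h5 := mul_le_mul_of_nonneg_left h2 hq
    simp only [smul_eq_mul] at h3 ⊢
    refine le_trans ?_ (add_le_add h4 h5)
    obtain rfl : q = 1 - p := by linarith
    simp only [inner_sub_right, inner_add_right, inner_smul_right]
    nlinarith
  have hs := strong_min _ hconv ℓ hℓ Y Z hmin X
  have hX : (⨆ i, (⟪gradient (f i) Y, X - Y⟫ + g i X + f i Y - F i X)) ≤ 0 := by
    refine ciSup_le fun j => ?_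
    have := grad_ineq (f j) (hfc j) (hfd j) Y X
    rw [hF]
    linarith
  have main : F i X - F i Z ≥ ℓ / 2 * (‖Z - X‖ ^ 2 - ‖Y - X‖ ^ 2) := by
    have h1 := le_ciSup (hbdd fun i => (⟪gradient (f i) Y, Z - Y⟫ + g i Z + f i Y - F i X)) i
    have h2 := descent (f i) (hfd i) (L i) (hflip i) Y Z
    have h3 := mul_le_mul_of_nonneg_right (hℓL i) (sq_nonneg ‖Z - Y‖)
    rw [norm_sub_rev Z X, norm_sub_rev Y X]
    rw [hF i Z]
    beta_reduce at *
    linarith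
  by_cases h : 0 ≤ (⨆ i, (F i X - F i Z))
  · rw [hp h]; exact main
  · rw [hq h]
    have := le_ciSup (hbdd fun i => F i X - F i Z) i
    beta_reduce at *
    linarith
end
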